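/- For any integers m ≥ 2 and n ≥ 1, the sum over all complete m-ary trees T with n internal vertices of the product over all internal vertices v of T of ((m·𝓗_v − 1)x − 𝓗_v + 1)/((m−1)·𝓗_v) equals (1/(mn+1)) · C((mn+1)x, n), as an identity of polynomials in x over ℚ. -/

import Mathlib

open Polynomial Finset

/-- A complete `m`-ary tree: a `leaf` is an external vertex and a `node`
has exactly `m` linearly ordered subtrees. -/
inductive MTree (m : ℕ) : Type
  | leaf : MTree m
  | node : (Fin m → MTree m) → MTree m

namespace MTree

/-- The number of internal vertices of a complete `m`-ary tree. -/
def internals {m : ℕ} : MTree m → ℕ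
  | leaf => 0
  | node c => 1 + ∑ i, (c i).internals

/-- The first kind of hook length of the root of `node c`: one plus the number of
internal vertices of all subtrees except the rightmost one. -/
def hook1 {m : ℕ} (c : Fin m → MTree m) : ℕ :=
  1 + ∑ i ∈ Finset.univ.filter (fun i : Fin m => (i : ℕ) + 1 < m), (c i).internals

/-- The product of `f (𝓗_v)` over all internal vertices `v` of a complete `m`-ary
tree, where `𝓗_v` is the first kind of hook length. -/
def hookProd1 {m : ℕ} {R : Type*} [CommSemiring R] (f : ℕ → R) : MTree m → R
  | leaf => 1
  | node c => f (hook1 c) * ∏ i, hookProd1 f (c i)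

/-- The number of internal vertices of the `(m+1-|S|)`-ary tree `T^S` obtained from a
complete `(m+1)`-ary tree `T` by recursively deleting, for every `r ∈ S ⊆ [m]`,
the `r`-th subtree of every remaining internal vertex (the label `r ∈ {1,…,m}`
corresponds to the child with index `r - 1`, i.e. to `Fin.castSucc` of `Fin m`). -/
def internalsS {m : ℕ} (S : Finset (Fin m)) : MTree (m + 1) → ℕ
  | leaf => 0
  | node c => 1 + ∑ i ∈ (S.image Fin.castSucc)ᶜ, internalsS S (c i)

/-- The product of `f (ℍ_v^S)` over all internal vertices `v` of a complete
`(m+1)`-ary tree, where `ℍ_v^S` is the second kind of hook length. -/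
def hookProdS {m : ℕ} {R : Type*} [CommSemiring R] (S : Finset (Fin m)) (f : ℕ → R) :
    MTree (m + 1) → R
  | leaf => 1
  | node c => f (internalsS S (node c)) * ∏ i, hookProdS S f (c i)

end MTree

/-!
Removing the last subtree of the root shows that the generating series `F` of the complete
`(k + 1)`-ary trees, weighted by `∏ f (𝓗_v)`, satisfies `F = 1 + t Q F`, where the coefficient of
`tⁿ` in `Q` is `f (n + 1)` times that of `F ^ k`; this equation determines `F`.

The Rothe series `B_q(p) = ∑ p / (p + q n) * C(p + q n, n) tⁿ` satisfies
`B_q(p) B_q(s) = B_q(p + s)`. For the weights of the theorem and `F = B_q(x)`, `q = m x`, this makes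
the coefficients of `F ^ (m - 1)` explicit and gives `1 - t Q = B_q(-x)`, so the functional equation
reduces to `B_q(-x) B_q(x) = 1`.
-/

open scoped PowerSeries Nat

lemma coeff_pow_congr {R : Type*} [CommSemiring R] {F G : R⟦X⟧} {n : ℕ} (k : ℕ)
    (h : ∀ l ≤ n, PowerSeries.coeff l F = PowerSeries.coeff l G) :
    PowerSeries.coeff n (F ^ k) = PowerSeries.coeff n (G ^ k) := by
  have htrunc : F.trunc (n + 1) = G.trunc (n + 1) := by
    ext l
    simp only [PowerSeries.coeff_trunc, Nat.lt_succ_iff]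
    split_ifs with hl
    exacts [h l hl, rfl]
  rw [← PowerSeries.coeff_coe_trunc_of_lt n.lt_succ_self, ← PowerSeries.trunc_trunc_pow, htrunc,
    PowerSeries.trunc_trunc_pow, PowerSeries.coeff_coe_trunc_of_lt n.lt_succ_self]

lemma eq_of_forall_eval_natCast_eq {R : Type*} [CommRing R] [IsDomain R] [CharZero R] {f g : R[X]}
    (h : ∀ n : ℕ, f.eval (n : R) = g.eval (n : R)) : f = g :=
  eq_of_infinite_eval_eq f g <|
    (Set.infinite_range_of_injective Nat.cast_injective).mono (Set.range_subset_iff.mpr h)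

lemma eval_descPochhammer_succ_left {R : Type*} [CommRing R] (n : ℕ) (y : R) :
    (descPochhammer R (n + 1)).eval y = y * (descPochhammer R n).eval (y - 1) := by
  simp [descPochhammer_succ_left]

namespace MTree

variable {m : ℕ}

section Finiteness

lemma internals_le_sum {ι : Type*} [Fintype ι] (c : ι → MTree m) (i : ι) :
    (c i).internals ≤ ∑ j, (c j).internals :=
  Finset.single_le_sum (f := fun j => (c j).internals) (fun _ _ => Nat.zero_le _)
    (Finset.mem_univ i)

lemma finite_setOf_internals_le (m n : ℕ) : {T : MTree m | T.internals ≤ n}.Finite := by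
  induction n with
  | zero =>
    refine (Set.finite_singleton leaf).subset ?_
    rintro (_ | c) hT
    · rfl
    · simp [internals] at hT
  | succ n ih =>
    refine ((Set.finite_singleton leaf).union
      ((Set.Finite.pi' fun _ : Fin m => ih).image node)).subset ?_
    rintro (_ | c) hT
    · exact Or.inl rfl
    · refine Or.inr ⟨c, fun i => ?_, rfl⟩
      have hi := internals_le_sum c i
      simp only [Set.mem_ofPred_eq, internals] at hT ⊢
      omega

lemma finite_setOf_internals_eq (m n : ℕ) : {T : MTree m | T.internals = n}.Finite :=
  (finite_setOf_internals_le m n).subset fun _ => le_of_eq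

lemma finite_setOf_sum_internals_eq (m k n : ℕ) :
    {c : Fin k → MTree m | ∑ i, (c i).internals = n}.Finite :=
  (Set.Finite.pi' fun _ => finite_setOf_internals_le m n).subset fun c hc i =>
    (internals_le_sum c i).trans (le_of_eq hc)

end Finiteness

section Enumeration

/-- The set `𝒯_{n,m}` of complete `m`-ary trees with `n` internal vertices, as a `Finset`. -/
noncomputable def trees (m n : ℕ) : Finset (MTree m) :=
  (finite_setOf_internals_eq m n).toFinset

/-- The ordered forests of `k` complete `m`-ary trees with `n` internal vertices in total. -/
noncomputable def forests (m k n : ℕ) : Finset (Fin k → MTree m) :=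
  (finite_setOf_sum_internals_eq m k n).toFinset

@[simp]
lemma mem_trees {n : ℕ} {T : MTree m} : T ∈ trees m n ↔ T.internals = n := by
  simp [trees]

@[simp]
lemma mem_forests {k n : ℕ} {c : Fin k → MTree m} :
    c ∈ forests m k n ↔ ∑ i, (c i).internals = n := by
  simp [forests]

lemma trees_zero (m : ℕ) : trees m 0 = {leaf} := by
  ext T
  cases T <;> simp [internals]

lemma sum_trees_succ {R : Type*} [AddCommMonoid R] (n : ℕ) (g : MTree m → R) :
    ∑ T ∈ trees m (n + 1), g T = ∑ c ∈ forests m m n, g (node c) := by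
  refine (Finset.sum_bij (fun c _ => node c) (fun c hc => ?_) (fun _ _ _ _ => node.inj)
    (fun T hT => ?_) fun _ _ => rfl).symm
  · simp [internals, mem_forests.mp hc, add_comm]
  · cases T with
    | leaf => simp [internals] at hT
    | node c => exact ⟨c, by simpa [internals, add_comm 1] using hT, rfl⟩

lemma sum_forests_succ {R : Type*} [AddCommMonoid R] (k n : ℕ)
    (g : (Fin (k + 1) → MTree m) → R) :
    ∑ c ∈ forests m (k + 1) n, g c =
      ∑ ij ∈ antidiagonal n, ∑ c ∈ forests m k ij.1, ∑ T ∈ trees m ij.2, g (Fin.snoc c T) := by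
  simp_rw [← Finset.sum_product', Finset.sum_sigma']
  refine (Finset.sum_bij' (fun z _ => Fin.snoc z.2.1 z.2.2)
    (fun c _ => ⟨(∑ i : Fin k, (c i.castSucc).internals, (c (Fin.last k)).internals),
      (Fin.init c, c (Fin.last k))⟩) ?_ ?_ ?_ ?_ ?_).symm
  · rintro ⟨⟨i, j⟩, c, T⟩ h
    obtain ⟨hn, hc, hT⟩ : i + j = n ∧ ∑ i, (c i).internals = i ∧ T.internals = j := by
      simpa using h
    simp [Fin.sum_univ_castSucc, hn, hc, hT]
  · intro c h
    simpa [Fin.sum_univ_castSucc, Fin.init] using h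
  · rintro ⟨⟨i, j⟩, c, T⟩ h
    obtain ⟨-, rfl, rfl⟩ : i + j = n ∧ ∑ i, (c i).internals = i ∧ T.internals = j := by
      simpa using h
    simp
  · simp
  · simp

end Enumeration

section GeneratingSeries

variable {R : Type*} [CommSemiring R]

/-- The generating series `∑ₙ (∑_{T ∈ 𝒯_{n,m}} w T) tⁿ` of complete `m`-ary trees with weights
`w`. -/
noncomputable def weightSeries (w : MTree m → R) : R⟦X⟧ :=
  PowerSeries.mk fun n => ∑ T ∈ trees m n, w T

lemma sum_forests_prod (w : MTree m → R) (k n : ℕ) :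
    ∑ c ∈ forests m k n, ∏ i, w (c i) = PowerSeries.coeff n (weightSeries w ^ k) := by
  induction k generalizing n with
  | zero =>
    rw [pow_zero, PowerSeries.coeff_one]
    split_ifs with h <;> simp [forests, h, eq_comm (a := 0)]
  | succ k ih =>
    rw [sum_forests_succ, pow_succ, PowerSeries.coeff_mul]
    refine Finset.sum_congr rfl fun ij _ => ?_
    simp only [Fin.prod_univ_castSucc, Fin.snoc_castSucc, Fin.snoc_last]
    rw [← Finset.sum_mul_sum, ih, weightSeries, PowerSeries.coeff_mk]

lemma map_hookProd1 {S : Type*} [CommSemiring S] (g : R →+* S) (f : ℕ → R) (T : MTree m) :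
    g (hookProd1 f T) = hookProd1 (fun h => g (f h)) T := by
  induction T with
  | leaf => simp [hookProd1]
  | node c ih => simp [hookProd1, ih]

lemma hook1_snoc {k : ℕ} (c : Fin k → MTree (k + 1)) (T : MTree (k + 1)) :
    hook1 (Fin.snoc c T : Fin (k + 1) → MTree (k + 1)) = ∑ i, (c i).internals + 1 := by
  simp [hook1, Finset.sum_filter, Fin.sum_univ_castSucc, add_comm]

lemma hookProd1_node_snoc {k : ℕ} (f : ℕ → R) (c : Fin k → MTree (k + 1)) (T : MTree (k + 1)) :
    hookProd1 f (node (Fin.snoc c T)) =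
      f (∑ i, (c i).internals + 1) * ((∏ i, hookProd1 f (c i)) * hookProd1 f T) := by
  simp [hookProd1, hook1_snoc, Fin.prod_univ_castSucc]

lemma sum_trees_succ_hookProd1 {k : ℕ} (f : ℕ → R) (n : ℕ) :
    ∑ T ∈ trees (k + 1) (n + 1), hookProd1 f T =
      ∑ ij ∈ antidiagonal n,
        f (ij.1 + 1) * (∑ c ∈ forests (k + 1) k ij.1, ∏ i, hookProd1 f (c i)) *
          ∑ T ∈ trees (k + 1) ij.2, hookProd1 f T := by
  rw [sum_trees_succ, sum_forests_succ]
  refine Finset.sum_congr rfl fun ij _ => ?_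
  rw [mul_assoc, Finset.sum_mul_sum, Finset.mul_sum]
  refine Finset.sum_congr rfl fun c hc => ?_
  rw [Finset.mul_sum]
  refine Finset.sum_congr rfl fun T _ => ?_
  rw [hookProd1_node_snoc, mem_forests.mp hc]

end GeneratingSeries

end MTree

section HookEquation

variable {R : Type*} [CommSemiring R] {f : ℕ → R} {k : ℕ} {F G : R⟦X⟧}

/-- The functional equation of the generating series of `MTree.hookProd1 f` on complete
`(k + 1)`-ary trees: a nonempty tree is a root, with weight `f (n + 1)` where `n` is the number of
internal vertices of its first `k` subtrees, these `k` subtrees, and the last one. -/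
def IsHookSeries (f : ℕ → R) (k : ℕ) (F : R⟦X⟧) : Prop :=
  F = 1 + PowerSeries.X *
    (PowerSeries.mk (fun n => f (n + 1) * PowerSeries.coeff n (F ^ k)) * F)

lemma isHookSeries_iff :
    IsHookSeries f k F ↔ PowerSeries.coeff 0 F = 1 ∧ ∀ n, PowerSeries.coeff (n + 1) F =
      ∑ ij ∈ antidiagonal n,
        f (ij.1 + 1) * PowerSeries.coeff ij.1 (F ^ k) * PowerSeries.coeff ij.2 F := by
  rw [IsHookSeries, PowerSeries.ext_iff, ← Nat.and_forall_add_one]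
  simp only [map_add, PowerSeries.coeff_succ_X_mul]
  simp [PowerSeries.coeff_mul, PowerSeries.coeff_one]

lemma MTree.isHookSeries_weightSeries_hookProd1 (f : ℕ → R) (k : ℕ) :
    IsHookSeries f k (weightSeries (hookProd1 f : MTree (k + 1) → R)) := by
  refine isHookSeries_iff.mpr ⟨by simp [weightSeries, trees_zero, hookProd1], fun n => ?_⟩
  simp_rw [← sum_forests_prod, weightSeries, PowerSeries.coeff_mk]
  exact sum_trees_succ_hookProd1 f n

theorem IsHookSeries.unique (hF : IsHookSeries f k F) (hG : IsHookSeries f k G) : F = G := by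
  rw [isHookSeries_iff] at hF hG
  ext n
  induction n using Nat.strong_induction_on with
  | _ n ih =>
  cases n with
  | zero => rw [hF.1, hG.1]
  | succ n =>
    rw [hF.2, hG.2]
    refine Finset.sum_congr rfl fun ij hij => ?_
    have hn : ij.1 + ij.2 = n := mem_antidiagonal.mp hij
    rw [coeff_pow_congr k fun l hl => ih l (by omega), ih ij.2 (by omega)]

end HookEquation

section Rothe

variable {K : Type*} [Field K]

/-- The Rothe polynomial `p / (p + q n) * C(p + q n, n)` in the variable `p`, in the form
`p (p + q n - 1) ⋯ (p + q n - n + 1) / n!` that needs no division by `p + q n`. -/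
noncomputable def rothePoly (q : K) : ℕ → K[X]
  | 0 => 1
  | n + 1 => C ((n + 1)! : K)⁻¹ * (X * (descPochhammer K n).comp (X + C (q * (n + 1) - 1)))

/-- The Rothe series `B_q(p)`, the generating series of the values at `p` of the polynomials
`rothePoly q n`. -/
noncomputable def rotheSeries (q p : K) : K⟦X⟧ :=
  PowerSeries.mk fun n => (rothePoly q n).eval p

lemma coeff_rotheSeries (q p : K) (n : ℕ) :
    PowerSeries.coeff n (rotheSeries q p) = (rothePoly q n).eval p :=
  PowerSeries.coeff_mk _ _

lemma eval_rothePoly_zero (q p : K) : (rothePoly q 0).eval p = 1 := by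
  simp [rothePoly]

lemma eval_rothePoly_succ (q p : K) (n : ℕ) :
    (rothePoly q (n + 1)).eval p =
      ((n + 1)! : K)⁻¹ * (p * (descPochhammer K n).eval (p + q * (n + 1) - 1)) := by
  simp [rothePoly, add_sub_assoc]

lemma eval_rothePoly_mul_self (a x : K) (n : ℕ) (h : a * n + 1 ≠ 0) :
    (rothePoly (a * x) n).eval x =
      (a * n + 1)⁻¹ * (n ! : K)⁻¹ * (descPochhammer K n).eval ((a * n + 1) * x) := by
  cases n with
  | zero => simp [eval_rothePoly_zero]
  | succ n =>
    have hy : x + a * x * (n + 1) - 1 = (a * (n + 1 : ℕ) + 1) * x - 1 := by push_cast; ring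
    rw [eval_rothePoly_succ, eval_descPochhammer_succ_left, hy]
    field_simp

@[simp]
lemma constantCoeff_rotheSeries (q p : K) : PowerSeries.constantCoeff (rotheSeries q p) = 1 := by
  rw [← PowerSeries.coeff_zero_eq_constantCoeff_apply, coeff_rotheSeries, eval_rothePoly_zero]

lemma rotheSeries_zero_right (q : K) : rotheSeries q 0 = 1 := by
  ext n
  cases n <;> simp [coeff_rotheSeries, eval_rothePoly_zero, eval_rothePoly_succ,
    PowerSeries.coeff_one]

variable [CharZero K]

lemma eval_rothePoly_succ_add_one (q p : K) (n : ℕ) :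
    (rothePoly q (n + 1)).eval (p + 1) =
      (rothePoly q (n + 1)).eval p + (rothePoly q n).eval (p + q) := by
  cases n with
  | zero => simp [eval_rothePoly_succ, eval_rothePoly_zero]
  | succ n =>
    set y : K := p + q * (n + 2) with hy
    have h₁ : p + 1 + q * ((n + 1 : ℕ) + 1) - 1 = y := by push_cast; ring
    have h₂ : p + q * ((n + 1 : ℕ) + 1) - 1 = y - 1 := by push_cast; ring
    have h₃ : p + q + q * (n + 1) - 1 = y - 1 := by ring
    simp only [eval_rothePoly_succ, h₁, h₂, h₃, eval_descPochhammer_succ_left n y,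
      descPochhammer_succ_eval n (y - 1), Nat.factorial_succ (n + 1)]
    have : ((n + 1)! : K) ≠ 0 := Nat.cast_ne_zero.mpr (n + 1).factorial_ne_zero
    have : (n + 1 + 1 : K) ≠ 0 := by exact_mod_cast (n + 1).succ_ne_zero
    push_cast
    field_simp
    rw [hy]
    ring

lemma rotheSeries_add_one (q p : K) :
    rotheSeries q (p + 1) = rotheSeries q p + PowerSeries.X * rotheSeries q (p + q) := by
  ext n
  cases n with
  | zero => simp
  | succ n =>
    simp [PowerSeries.coeff_succ_X_mul, coeff_rotheSeries, eval_rothePoly_succ_add_one]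

-- Both sides are polynomials in `p`, so it suffices to compare them at natural numbers `p`, where
-- the difference equation gives an induction on `p` whose extra term has lower degree in `t`.
lemma coeff_rotheSeries_add (q p s : K) (n : ℕ) :
    PowerSeries.coeff n (rotheSeries q (p + s)) =
      PowerSeries.coeff n (rotheSeries q p * rotheSeries q s) := by
  induction n generalizing p s with
  | zero => simp
  | succ n ih =>
    have h_nat (k : ℕ) : PowerSeries.coeff (n + 1) (rotheSeries q (k + s)) =
        PowerSeries.coeff (n + 1) (rotheSeries q k * rotheSeries q s) := by
      induction k with
      | zero => simp [rotheSeries_zero_right]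
      | succ k ihk =>
        push_cast
        rw [add_right_comm, rotheSeries_add_one, rotheSeries_add_one, add_mul, mul_assoc, map_add,
          map_add, PowerSeries.coeff_succ_X_mul, PowerSeries.coeff_succ_X_mul, ihk, ← ih,
          add_right_comm]
    have h_poly : (rothePoly q (n + 1)).comp (X + C s) =
        ∑ ij ∈ antidiagonal (n + 1), rothePoly q ij.1 * C ((rothePoly q ij.2).eval s) :=
      eq_of_forall_eval_natCast_eq fun k => by
        simpa [eval_finsetSum, PowerSeries.coeff_mul, coeff_rotheSeries] using h_nat k
    simpa [eval_finsetSum, PowerSeries.coeff_mul, coeff_rotheSeries] using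
      congrArg (eval p) h_poly

theorem rotheSeries_add (q p s : K) :
    rotheSeries q (p + s) = rotheSeries q p * rotheSeries q s :=
  PowerSeries.ext (coeff_rotheSeries_add q p s)

lemma rotheSeries_natCast_mul (q p : K) (k : ℕ) :
    rotheSeries q (k * p) = rotheSeries q p ^ k := by
  induction k with
  | zero => simp [rotheSeries_zero_right]
  | succ k ih => rw [Nat.cast_succ, add_one_mul, rotheSeries_add, ih, pow_succ]

end Rothe

section HookLength

variable {K : Type*} [Field K] [CharZero K]

/-- The factor `((m h - 1) x - h + 1) / ((m - 1) h)` contributed by an internal vertex of hook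
length `h`. -/
def hookWeight (m : ℕ) (x : K) (h : ℕ) : K :=
  (((m : K) - 1) * h)⁻¹ * ((m * h - 1) * x - (h - 1))

lemma hookWeight_mul_eval_rothePoly {k : ℕ} (hk : k ≠ 0) (x : K) (n : ℕ) :
    hookWeight (k + 1) x (n + 1) * (rothePoly ((k + 1) * x) n).eval (k * x) =
      -(rothePoly ((k + 1) * x) (n + 1)).eval (-x) := by
  have hk' : (k : K) ≠ 0 := Nat.cast_ne_zero.mpr hk
  cases n with
  | zero => simp [hookWeight, eval_rothePoly_zero, eval_rothePoly_succ, hk']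
  | succ n =>
    set y : K := ((k + 1) * (n + 2) - 1) * x with hy
    have h₁ : k * x + (k + 1) * x * (n + 1) - 1 = y - 1 := by ring
    have h₂ : -x + (k + 1) * x * ((n + 1 : ℕ) + 1) - 1 = y - 1 := by push_cast; ring
    simp only [hookWeight, eval_rothePoly_succ, h₁, h₂, descPochhammer_succ_eval,
      Nat.factorial_succ (n + 1)]
    have : ((n + 1)! : K) ≠ 0 := Nat.cast_ne_zero.mpr (n + 1).factorial_ne_zero
    have : (n + 1 + 1 : K) ≠ 0 := by exact_mod_cast (n + 1).succ_ne_zero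
    push_cast
    rw [add_sub_cancel_right]
    field_simp
    rw [hy]
    ring

theorem isHookSeries_rotheSeries {k : ℕ} (hk : k ≠ 0) (x : K) :
    IsHookSeries (hookWeight (k + 1) x) k (rotheSeries ((k + 1) * x) x) := by
  set q : K := (k + 1) * x
  set Q : K⟦X⟧ := PowerSeries.mk fun n =>
    hookWeight (k + 1) x (n + 1) * PowerSeries.coeff n (rotheSeries q x ^ k) with hQ
  have h_neg : rotheSeries q (-x) = 1 - PowerSeries.X * Q := by
    ext n
    cases n with
    | zero => simp
    | succ n =>
      simp [hQ, PowerSeries.coeff_succ_X_mul, PowerSeries.coeff_one, ← rotheSeries_natCast_mul,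
        coeff_rotheSeries, q, hookWeight_mul_eval_rothePoly hk]
  have h_inv : rotheSeries q (-x) * rotheSeries q x = 1 := by
    rw [← rotheSeries_add, neg_add_cancel, rotheSeries_zero_right]
  rw [IsHookSeries, ← hQ]
  linear_combination h_inv - rotheSeries q x * h_neg

theorem MTree.sum_hookProd1_hookWeight {m : ℕ} (hm : 2 ≤ m) (n : ℕ) (x : K) :
    ∑ T ∈ trees m n, hookProd1 (hookWeight m x) T =
      ((m : K) * n + 1)⁻¹ * (n ! : K)⁻¹ * (descPochhammer K n).eval ((m * n + 1) * x) := by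
  obtain ⟨k, rfl⟩ : ∃ k, m = k + 1 := ⟨m - 1, by omega⟩
  have h_series : weightSeries (hookProd1 (hookWeight (k + 1) x)) =
      rotheSeries ((k + 1) * x) x :=
    (isHookSeries_weightSeries_hookProd1 _ k).unique (isHookSeries_rotheSeries (by omega) x)
  have h_coeff := congrArg (PowerSeries.coeff n) h_series
  rw [weightSeries, PowerSeries.coeff_mk, coeff_rotheSeries] at h_coeff
  rw [h_coeff, eval_rothePoly_mul_self _ _ _ (by exact_mod_cast ((k + 1) * n).succ_ne_zero)]
  push_cast
  rfl

theorem hook_length_formula_first_kind'_general (m n : ℕ) (hm : 2 ≤ m) :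
    (∑ᶠ T ∈ {T : MTree m | T.internals = n},
        MTree.hookProd1 (fun h =>
          C ((((m : K) - 1) * (h : K))⁻¹) *
            (C ((m : K) * (h : K) - 1) * (X : K[X]) - C ((h : K) - 1))) T)
      = C (((m : K) * n + 1)⁻¹ * (n.factorial : K)⁻¹) *
          ∏ j ∈ Finset.range n,
            (C ((m : K) * n + 1) * (X : K[X]) - C (j : K)) := by
  rw [finsum_mem_eq_finite_toFinset_sum _ (MTree.finite_setOf_internals_eq m n), ← MTree.trees]
  refine Polynomial.funext fun x => ?_
  have h_weight (h : ℕ) : eval x (C ((((m : K) - 1) * (h : K))⁻¹) *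
      (C ((m : K) * (h : K) - 1) * X - C ((h : K) - 1))) = hookWeight m x h := by
    simp [hookWeight]
  have h_eval (f : ℕ → K[X]) (T : MTree m) :
      eval x (MTree.hookProd1 f T) = MTree.hookProd1 (fun h => eval x (f h)) T :=
    MTree.map_hookProd1 (evalRingHom x) f T
  simp_rw [eval_finsetSum, h_eval, h_weight]
  rw [MTree.sum_hookProd1_hookWeight hm, descPochhammer_eval_eq_prod_range]
  simp [eval_prod]

end HookLength

/-- **Theorem 1.1, second form (Sun–Zhang).**  For `m ≥ 2` and `n ≥ 1`,
`∑_{T ∈ 𝒯_{n,m}} ∏_{v ∈ 𝓘(T)} ((m𝓗_v - 1)x - 𝓗_v + 1)/((m-1)𝓗_v)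
  = (1/(mn+1)) ⬝ C((mn+1)x, n)` in `ℚ[x]`, where
`C(y,n) = y(y-1)⋯(y-n+1)/n!`. -/
theorem hook_length_formula_first_kind' (m n : ℕ) (hm : 2 ≤ m) (hn : 1 ≤ n) :
    (∑ᶠ T ∈ {T : MTree m | T.internals = n},
        MTree.hookProd1 (fun h =>
          C ((((m : ℚ) - 1) * (h : ℚ))⁻¹) *
            (C ((m : ℚ) * (h : ℚ) - 1) * (X : ℚ[X]) - C ((h : ℚ) - 1))) T)
      = C (((m : ℚ) * n + 1)⁻¹ * (n.factorial : ℚ)⁻¹) *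
          ∏ j ∈ Finset.range n,
            (C ((m : ℚ) * n + 1) * (X : ℚ[X]) - C (j : ℚ)) :=
  hook_length_formula_first_kind'_general m n hm
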